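/- Let A be a C*-algebra and 0 < ε < 1/8. If a ∈ A satisfies ‖a - a²‖ ≤ ε and ‖a - a*‖ ≤ ε, then there exists a projection P ∈ A (i.e., P = P² = P*) such that ‖P - a‖ ≤ 4ε. -/

import Mathlib

/-!
Let `y` be the small solution of `y - y ^ 2 = a - a ^ 2`; it commutes with `a`, and
`e = (a - y) * (1 - 2 * y)⁻¹` is an idempotent with `a = e + y * (1 - 2 * e)`. The C*-identity
bounds the reflection `1 - 2 * e` well enough to give `‖e - star e‖ < 1`, so there is a self-adjoint
projection `p` with the same range as `e`. Relative to `p` and `1 - p` the element `a` is upper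
triangular: its diagonal blocks differ from those of `p` by compressions of `y`, and its
off-diagonal block is also that of `a - star a`. Hence `‖p - a‖ ≤ 2 * ‖y‖ + ‖a - star a‖`.
-/

section SmallRoot

variable {R : Type*} [NonUnitalNormedRing R]

theorem norm_mul_self_sub_mul_self_le {x y : R} {r : ℝ} (hx : ‖x‖ ≤ r) (hy : ‖y‖ ≤ r) :
    ‖x * x - y * y‖ ≤ 2 * r * ‖x - y‖ := by
  calc ‖x * x - y * y‖ = ‖x * (x - y) + (x - y) * y‖ := by congr 1; noncomm_ring
    _ ≤ ‖x‖ * ‖x - y‖ + ‖x - y‖ * ‖y‖ := norm_add_le_of_le (norm_mul_le _ _) (norm_mul_le _ _)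
    _ ≤ r * ‖x - y‖ + ‖x - y‖ * r := by gcongr
    _ = 2 * r * ‖x - y‖ := by ring

theorem exists_mem_centralizer_centralizer_sub_mul_self_eq [CompleteSpace R] {x : R} {r : ℝ}
    (hr : r < 1 / 2) (hx : ‖x‖ + r ^ 2 ≤ r) :
    ∃ y ∈ Set.centralizer (Set.centralizer {x}), ‖y‖ ≤ r ∧ y - y * y = x := by
  have hr0 : 0 ≤ r := by nlinarith [norm_nonneg x, sq_nonneg r]
  let S : Set R := Metric.closedBall 0 r ∩ Set.centralizer (Set.centralizer {x})
  have hS : IsComplete S :=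
    (Metric.isClosed_closedBall.inter (Set.isClosed_centralizer _)).isComplete
  let f : R → R := fun y ↦ x + y * y
  have hmaps : Set.MapsTo f S S := by
    rintro y ⟨hy, hyc⟩
    rw [mem_closedBall_zero_iff] at hy
    refine ⟨mem_closedBall_zero_iff.2 ?_, Set.add_mem_centralizer
      (Set.subset_centralizer_centralizer rfl) (Set.mul_mem_centralizer hyc hyc)⟩
    calc ‖x + y * y‖ ≤ ‖x‖ + ‖y‖ * ‖y‖ := norm_add_le_of_le le_rfl (norm_mul_le _ _)
      _ ≤ ‖x‖ + r ^ 2 := by rw [sq]; gcongr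
      _ ≤ r := hx
  have hcontr : ContractingWith (2 * r).toNNReal (hmaps.restrict f S S) := by
    refine ⟨Real.toNNReal_lt_one.2 (by linarith), LipschitzWith.of_dist_le' ?_⟩
    rintro ⟨y, hy, _⟩ ⟨z, hz, _⟩
    rw [mem_closedBall_zero_iff] at hy hz
    change dist (x + y * y) (x + z * z) ≤ 2 * r * dist y z
    rw [dist_add_left, dist_eq_norm, dist_eq_norm]
    exact norm_mul_self_sub_mul_self_le hy hz
  have h0 : (0 : R) ∈ S := ⟨Metric.mem_closedBall_self hr0, Set.zero_mem_centralizer⟩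
  obtain ⟨y, ⟨hy, hyc⟩, hfix, -⟩ := hcontr.exists_fixedPoint' hS hmaps h0 (edist_ne_top _ _)
  exact ⟨y, hyc, mem_closedBall_zero_iff.1 hy, sub_eq_of_eq_add hfix.symm⟩

end SmallRoot

section Ring

variable {R : Type*} [Ring R]

theorem exists_isIdempotentElem_eq_add_mul_one_sub_two_mul {a y : R} (hay : Commute a y)
    (hy : y - y * y = a - a * a) (hu : IsUnit (1 - 2 * y)) :
    ∃ e : R, IsIdempotentElem e ∧ Commute e y ∧ a = e + y * (1 - 2 * e) := by
  obtain ⟨u, hu⟩ := hu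
  have hyu : Commute y ↑u⁻¹ := Commute.units_inv_right <| by
    rw [hu]; exact (Commute.one_right y).sub_right ((Commute.ofNat_right y 2).mul_right rfl)
  have hau : Commute a ↑u⁻¹ := Commute.units_inv_right <| by
    rw [hu]; exact (Commute.one_right a).sub_right ((Commute.ofNat_right a 2).mul_right hay)
  have hdu : Commute (a - y) ↑u⁻¹ := hau.sub_left hyu
  have hsq : (a - y) * (a - y) = (a - y) * u := by
    rw [hu]
    linear_combination (norm := noncomm_ring) hy + hay.eq
  refine ⟨(a - y) * ↑u⁻¹, ?_, (hay.sub_left rfl).mul_left hyu.symm, ?_⟩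
  · calc (a - y) * ↑u⁻¹ * ((a - y) * ↑u⁻¹)
        = (a - y) * (a - y) * ↑u⁻¹ * ↑u⁻¹ := by
          rw [mul_assoc, ← mul_assoc _ (a - y), ← hdu.eq]; simp only [mul_assoc]
      _ = (a - y) * ↑u⁻¹ := by rw [hsq, Units.mul_inv_cancel_right]
  · have hmul : (1 - 2 * y) * ((a - y) * ↑u⁻¹) = a - y := by
      rw [hdu.eq, ← hu, Units.mul_inv_cancel_left]
    linear_combination (norm := noncomm_ring) -hmul

theorem mul_one_sub_sub_sq_of_isIdempotentElem {e f : R} (he : IsIdempotentElem e)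
    (hf : IsIdempotentElem f) : e * (1 - (e - f) ^ 2) = e * f * e := by
  calc e * (1 - (e - f) ^ 2) = e - e * e * e + e * e * f + e * f * e - e * (f * f) := by
        noncomm_ring
    _ = e * f * e := by rw [he.eq, he.eq, hf.eq]; abel

theorem commute_one_sub_sub_sq_of_isIdempotentElem {e f : R} (he : IsIdempotentElem e)
    (hf : IsIdempotentElem f) : Commute e (1 - (e - f) ^ 2) := by
  refine (mul_one_sub_sub_sq_of_isIdempotentElem he hf).trans ?_
  calc e * f * e = e - e * e * e + e * f * e + f * (e * e) - f * f * e := by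
        simp only [he.eq, hf.eq]; abel
    _ = (1 - (e - f) ^ 2) * e := by noncomm_ring

theorem exists_isStarProjection_mul_eq [StarRing R] {e : R} (he : IsIdempotentElem e)
    (hu : IsUnit (1 - (e - star e) ^ 2)) :
    ∃ p : R, IsStarProjection p ∧ p * e = e ∧ e * p = p := by
  obtain ⟨u, hu⟩ := hu
  have heu : Commute e ↑u⁻¹ := Commute.units_inv_right <| by
    rw [hu]; exact commute_one_sub_sub_sq_of_isIdempotentElem he he.star
  have hsu : Commute (star e) ↑u⁻¹ := Commute.units_inv_right <| by
    rw [hu, ← neg_sq, neg_sub]; exact commute_one_sub_sub_sq_of_isIdempotentElem he.star he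
  have hstar : star u = u := Units.ext <| by
    rw [Units.coe_star, hu, star_sub, star_one, star_pow, star_sub, star_star, ← neg_sq, neg_sub]
  have hpe : e * star e * ↑u⁻¹ * e = e := by
    rw [mul_assoc, ← heu.eq, ← mul_assoc, ← mul_one_sub_sub_sq_of_isIdempotentElem he he.star,
      ← hu, Units.mul_inv_cancel_right]
  refine ⟨e * star e * ↑u⁻¹, ⟨?_, ?_⟩, hpe, ?_⟩
  · rw [IsIdempotentElem, ← mul_assoc, ← mul_assoc, hpe]
  · rw [IsSelfAdjoint, star_mul, star_mul, star_star, ← Units.coe_star, star_inv, hstar]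
    exact ((heu.mul_left hsu).eq).symm
  · rw [← mul_assoc, ← mul_assoc, he.eq]

theorem mul_eq_sub_mul_of_eq_add_mul {a e p y : R} (ha : a = e + y * (1 - 2 * e))
    (hep : e * p = p) : a * p = p - y * p := by
  calc a * p = e * p + y * p - 2 * (y * (e * p)) := by rw [ha]; noncomm_ring
    _ = p - y * p := by rw [hep]; noncomm_ring

theorem one_sub_mul_eq_of_eq_add_mul {a e p y : R} (ha : a = e + y * (1 - 2 * e))
    (hey : Commute e y) (hpe : p * e = e) : (1 - p) * a = (1 - p) * y := by
  have hpe' : (1 - p) * e = 0 := by rw [sub_mul, one_mul, hpe, sub_self]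
  calc (1 - p) * a = (1 - p) * e + (1 - p) * y - 2 * ((1 - p) * (y * e)) := by
        rw [ha]; noncomm_ring
    _ = (1 - p) * y := by rw [← hey.eq, ← mul_assoc (1 - p) e, hpe']; noncomm_ring

theorem one_sub_mul_mul_eq_zero_of_commute {b e p : R} (heb : Commute e b) (hpe : p * e = e)
    (hep : e * p = p) : (1 - p) * b * p = 0 := by
  calc (1 - p) * b * p = (1 - p) * (b * e) * p := by rw [mul_assoc, mul_assoc, mul_assoc, hep]
    _ = (e - p * e) * b * p := by rw [← heb.eq]; noncomm_ring
    _ = 0 := by rw [hpe, sub_self, zero_mul, zero_mul]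

theorem sub_eq_mul_sub_mul_sub_mul [StarRing R] {a e p y : R} (ha : a = e + y * (1 - 2 * e))
    (hey : Commute e y) (hp : IsStarProjection p) (hpe : p * e = e) (hep : e * p = p) :
    p - a = y * p - (1 - p) * y * (1 - p) - p * (a - star a) * (1 - p) := by
  have hea : Commute e a := by
    rw [ha]
    exact (Commute.refl e).add_right <| hey.mul_right <|
      (Commute.one_right e).sub_right ((Commute.ofNat_right e 2).mul_right rfl)
  have hstar : p * star a * (1 - p) = 0 := by
    simpa only [star_mul, hp.isSelfAdjoint.star_eq, hp.one_sub.isSelfAdjoint.star_eq, star_zero,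
      mul_assoc] using congrArg star (one_sub_mul_mul_eq_zero_of_commute hea hpe hep)
  calc p - a = p - a * p - (1 - p) * a * (1 - p) - p * a * (1 - p) := by noncomm_ring
    _ = y * p - (1 - p) * y * (1 - p) - p * (a - star a) * (1 - p) := by
      rw [mul_eq_sub_mul_of_eq_add_mul ha hep, one_sub_mul_eq_of_eq_add_mul ha hey hpe, mul_sub p,
        sub_mul (p * a), hstar]
      abel

end Ring

theorem exists_isStarProjection_mul_eq_of_norm_sub_star_lt_one {A : Type*} [NormedRing A]
    [StarRing A] [CompleteSpace A] {e : A} (he : IsIdempotentElem e) (h : ‖e - star e‖ < 1) :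
    ∃ p : A, IsStarProjection p ∧ p * e = e ∧ e * p = p := by
  refine exists_isStarProjection_mul_eq he (isUnit_one_sub_of_norm_lt_one ?_)
  exact (norm_pow_le' _ two_pos).trans_lt (pow_lt_one₀ (norm_nonneg _) h two_ne_zero)

theorem norm_sub_star_le_add {E : Type*} [SeminormedAddCommGroup E] [StarAddMonoid E]
    [NormedStarGroup E] (a b : E) : ‖b - star b‖ ≤ ‖a - star a‖ + 2 * ‖a - b‖ := by
  calc ‖b - star b‖ = ‖(a - star a) - (a - b) + star (a - b)‖ := by rw [star_sub]; congr 1; abel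
    _ ≤ ‖a - star a‖ + ‖a - b‖ + ‖star (a - b)‖ :=
      norm_add_le_of_le (norm_sub_le _ _) le_rfl
    _ = ‖a - star a‖ + 2 * ‖a - b‖ := by rw [norm_star]; ring

section CStarRing

theorem norm_sq_le_norm_mul_self_add {A : Type*} [NonUnitalNormedRing A] [StarRing A]
    [CStarRing A] (v : A) : ‖v‖ ^ 2 ≤ ‖v * v‖ + ‖v - star v‖ * ‖v‖ := by
  calc ‖v‖ ^ 2 = ‖v * v - (v - star v) * v‖ := by
        rw [sq, ← CStarRing.norm_star_mul_self]; congr 1; noncomm_ring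
    _ ≤ ‖v * v‖ + ‖v - star v‖ * ‖v‖ := norm_sub_le_of_le le_rfl (norm_mul_le _ _)

variable {A : Type*} [NormedRing A] [StarRing A] [CStarRing A]

theorem norm_one_sub_two_mul_sq_le {e : A} (he : IsIdempotentElem e) :
    ‖1 - 2 * e‖ ^ 2 ≤ 1 + 2 * ‖e - star e‖ * ‖1 - 2 * e‖ := by
  have hmul : (1 - 2 * e) * (1 - 2 * e) = 1 := by
    linear_combination (norm := noncomm_ring) 4 * he.eq
  have hstar : ‖(1 - 2 * e) - star (1 - 2 * e)‖ ≤ 2 * ‖e - star e‖ := by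
    calc ‖(1 - 2 * e) - star (1 - 2 * e)‖ = ‖-(e - star e) - (e - star e)‖ := by
          rw [two_mul, star_sub, star_add, star_one]; congr 1; abel
      _ ≤ ‖e - star e‖ + ‖e - star e‖ := norm_sub_le_of_le (norm_neg _).le le_rfl
      _ = 2 * ‖e - star e‖ := (two_mul _).symm
  calc ‖1 - 2 * e‖ ^ 2 ≤ ‖(1 : A)‖ + ‖(1 - 2 * e) - star (1 - 2 * e)‖ * ‖1 - 2 * e‖ := by
        simpa only [hmul] using norm_sq_le_norm_mul_self_add (1 - 2 * e)
    _ ≤ 1 + 2 * ‖e - star e‖ * ‖1 - 2 * e‖ := by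
        gcongr
        exact IsStarProjection.norm_le 1 (.one A)

theorem norm_sub_star_lt_one_of_eq_add_mul {a e y : A} (he : IsIdempotentElem e)
    (ha : a = e + y * (1 - 2 * e)) (hstar : ‖a - star a‖ ≤ 1 / 8) (hy : ‖y‖ ≤ 5 / 32) :
    ‖e - star e‖ < 1 := by
  have hsub : ‖e - star e‖ ≤ 1 / 8 + 5 / 16 * ‖1 - 2 * e‖ := by
    calc ‖e - star e‖ ≤ ‖a - star a‖ + 2 * ‖a - e‖ := norm_sub_star_le_add a e
      _ = ‖a - star a‖ + 2 * ‖y * (1 - 2 * e)‖ := by rw [sub_eq_of_eq_add' ha]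
      _ ≤ 1 / 8 + 2 * (5 / 32 * ‖1 - 2 * e‖) := by gcongr; exact norm_mul_le_of_le hy le_rfl
      _ = 1 / 8 + 5 / 16 * ‖1 - 2 * e‖ := by ring
  have hrefl : ‖1 - 2 * e‖ ≤ 2 := by
    have hsq : ‖1 - 2 * e‖ ^ 2 ≤ 1 + 2 * (1 / 8 + 5 / 16 * ‖1 - 2 * e‖) * ‖1 - 2 * e‖ :=
      (norm_one_sub_two_mul_sq_le he).trans (by gcongr)
    -- The bound reads `3 / 8 * t ^ 2 ≤ 1 + t / 4`, that is, `(t - 2) * (3 * t + 4) ≤ 0`.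
    nlinarith [norm_nonneg (1 - 2 * e)]
  linarith

theorem norm_sub_le_two_mul_norm_add {a e p y : A} (ha : a = e + y * (1 - 2 * e))
    (hey : Commute e y) (hp : IsStarProjection p) (hpe : p * e = e) (hep : e * p = p) :
    ‖p - a‖ ≤ 2 * ‖y‖ + ‖a - star a‖ := by
  have hp1 : ‖p‖ ≤ 1 := hp.norm_le p
  have hq1 : ‖1 - p‖ ≤ 1 := hp.one_sub.norm_le _
  calc ‖p - a‖ = ‖y * p - (1 - p) * y * (1 - p) - p * (a - star a) * (1 - p)‖ := by
        rw [← sub_eq_mul_sub_mul_sub_mul ha hey hp hpe hep]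
    _ ≤ ‖y‖ * 1 + 1 * ‖y‖ * 1 + 1 * ‖a - star a‖ * 1 := by
        refine norm_sub_le_of_le (norm_sub_le_of_le ?_ ?_) ?_
        · exact norm_mul_le_of_le le_rfl hp1
        · exact norm_mul_le_of_le (norm_mul_le_of_le hq1 le_rfl) hq1
        · exact norm_mul_le_of_le (norm_mul_le_of_le hp1 le_rfl) hq1
    _ = 2 * ‖y‖ + ‖a - star a‖ := by ring

end CStarRing

/-- In a C*-algebra, an ε-approximate projection (for ε < 1/8) is
within 4ε of an actual projection. -/
theorem almost_projection_near_projection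
    {A : Type*} [NormedRing A] [StarRing A] [CStarRing A] [CompleteSpace A]
    (ε : ℝ) (hε0 : 0 < ε) (hε : ε < 1 / 8) (a : A)
    (h1 : ‖a - a ^ 2‖ ≤ ε) (h2 : ‖a - star a‖ ≤ ε) :
    ∃ P : A, P ^ 2 = P ∧ star P = P ∧ ‖P - a‖ ≤ 4 * ε := by
  have hx : ‖a - a * a‖ + (5 / 4 * ε) ^ 2 ≤ 5 / 4 * ε := by
    rw [← sq a]; nlinarith
  obtain ⟨y, hyc, hyr, hya⟩ :=
    exists_mem_centralizer_centralizer_sub_mul_self_eq (by linarith) hx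
  have hay : Commute a y := hyc a <| by
    rintro _ rfl
    exact ((Commute.refl a).sub_left ((Commute.refl a).mul_left rfl)).eq
  have hu : IsUnit (1 - 2 * y) := isUnit_one_sub_of_norm_lt_one <| by
    rw [two_mul]; linarith [norm_add_le y y]
  obtain ⟨e, he, hey, hae⟩ := exists_isIdempotentElem_eq_add_mul_one_sub_two_mul hay hya hu
  have hes : ‖e - star e‖ < 1 :=
    norm_sub_star_lt_one_of_eq_add_mul he hae (h2.trans hε.le) (by linarith)
  obtain ⟨p, hp, hpe, hep⟩ := exists_isStarProjection_mul_eq_of_norm_sub_star_lt_one he hes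
  refine ⟨p, (sq p).trans hp.isIdempotentElem, hp.isSelfAdjoint, ?_⟩
  linarith [norm_sub_le_two_mul_norm_add hae hey hp hpe hep]
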